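/- Let K be a finite field with q elements whose characteristic divides neither k nor k+1 (k ≥ 1), and let s be the number of elements x ∈ K with x^(k+1) = x. Let X be the rhombus poset on {x₀, x₁, …, x_n, x_{n+1}, y₁, …, y_m} with relations: x₀ ≤ x₁ ≤ ⋯ ≤ x_n ≤ x_{n+1}; y₁ ≤ y₂ ≤ ⋯ ≤ y_m; x₀ ≤ y₁ and y_m ≤ x_{n+1}; and no x_i with 1 ≤ i ≤ n is comparable with any y_j. Then the number of elements f of the incidence algebra I(X, K) satisfying f^(k+1) = f equals Σ s · (n!/(n₁!⋯n_s!)) · (m!/(m₁!⋯m_s!)) · q^(Σ_{1 ≤ i < j ≤ s} (n_i·n_j + m_i·m_j)) · F(n₁,…,n_s,m₁,…,m_s), where the sum ranges over all tuples of natural numbers (n₁,…,n_s) with n₁+⋯+n_s = n and (m₁,…,m_s) with m₁+⋯+m_s = m, and F(n₁,…,n_s,m₁,…,m_s) = q^(2(n−n₁+m−m₁)) + Σ_{j=2}^{s} q^(2(n+m)+1−(n₁+n_j+m₁+m_j)). -/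

import Mathlib

open Finset

namespace IncidenceAlgebra

variable {K X : Type*} [Field K] [PartialOrder X]

instance instFinite [Finite K] [Finite X] : Finite (IncidenceAlgebra K X) :=
  Finite.of_injective (fun f : IncidenceAlgebra K X => (f : X → X → K)) DFunLike.coe_injective

theorem mul_apply_self [LocallyFiniteOrder X] (f g : IncidenceAlgebra K X) (a : X) :
    (f * g) a a = f a a * g a a := by
  simp

section Diag
variable [DecidableEq X]

/-- The diagonal element of the incidence algebra with prescribed diagonal entries. -/
def diag (d : X → K) : IncidenceAlgebra K X :=
  ⟨fun a b => if a = b then d a else 0, fun _ _ h => if_neg fun e => h e.le⟩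

theorem diag_apply (d : X → K) (a b : X) : diag d a b = if a = b then d a else 0 := rfl

variable [LocallyFiniteOrder X]

/-- Evaluation at a diagonal entry, as a ring homomorphism. -/
def diagEval (a : X) : IncidenceAlgebra K X →+* K where
  toFun f := f a a
  map_one' := by simp
  map_mul' f g := mul_apply_self f g a
  map_zero' := rfl
  map_add' _ _ := rfl

theorem diagEval_apply (a : X) (f : IncidenceAlgebra K X) : diagEval a f = f a a := rfl

theorem mul_diag_apply (f : IncidenceAlgebra K X) (d : X → K) (a b : X) :
    (f * diag d) a b = f a b * d b := by
  by_cases h : a ≤ b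
  · rw [mul_apply, sum_eq_single b]
    · simp [diag_apply]
    · intro t _ ht; simp [diag_apply, ht]
    · simp [h]
  · simp [apply_eq_zero_of_not_le h]

theorem diag_mul_apply (f : IncidenceAlgebra K X) (d : X → K) (a b : X) :
    (diag d * f) a b = d a * f a b := by
  by_cases h : a ≤ b
  · rw [mul_apply, sum_eq_single a]
    · simp [diag_apply]
    · intro t _ ht; simp [diag_apply, ht.symm]
    · simp [h]
  · simp [apply_eq_zero_of_not_le h]

theorem diag_pow (d : X → K) (r : ℕ) : diag d ^ r = diag (d ^ r) := by
  induction r with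
  | zero => ext a b _; simp [diag_apply]
  | succ r ih =>
    ext a b _
    rw [pow_succ, ih, mul_diag_apply, diag_apply, diag_apply]
    split_ifs with h <;> simp [h, pow_succ]

/-- The element `∑ f ^ i * D ^ (k - i) - 1` intertwines a potent `f` with its diagonal part `D`. -/
theorem exists_intertwiner {k : ℕ} {d : X → K} (hd : ∀ a, d a ^ (k + 1) = d a)
    {f : IncidenceAlgebra K X} (hf : f ^ (k + 1) = f) (hfd : ∀ a, f a a = d a) :
    ∃ w : IncidenceAlgebra K X, (∀ a, w a a = (k + 1) * d a ^ k - 1) ∧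
      f * w = w * diag d := by
  have hD : (diag d : IncidenceAlgebra K X) ^ (k + 1) = diag d := by
    rw [diag_pow]; congr 1; funext a; exact hd a
  refine ⟨∑ i ∈ range (k + 1), f ^ i * diag d ^ (k - i) - 1, fun a => ?_, ?_⟩
  · rw [← diagEval_apply, map_sub, map_sum, map_one]
    simp only [map_mul, map_pow, diagEval_apply, hfd, diag_apply, if_true, ← pow_add]
    rw [sum_congr rfl (g := fun _ => d a ^ k) fun i hi => by
      rw [Nat.add_sub_cancel' (Nat.lt_succ_iff.1 (mem_range.1 hi))]]
    simp
  · have htel := sum_range_sub (fun i => f ^ i * diag d ^ (k + 1 - i)) (k + 1)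
    have hterm : ∀ i ∈ range (k + 1),
        f ^ (i + 1) * diag d ^ (k + 1 - (i + 1)) - f ^ i * diag d ^ (k + 1 - i)
          = f * (f ^ i * diag d ^ (k - i)) - f ^ i * diag d ^ (k - i) * diag d := by
      intro i hi
      rw [Nat.add_sub_add_right, Nat.succ_sub (Nat.lt_succ_iff.1 (mem_range.1 hi)), pow_succ',
        pow_succ (diag d), mul_assoc, mul_assoc]
    rw [sum_congr rfl hterm, sum_sub_distrib, ← mul_sum, ← sum_mul] at htel
    simp only [Nat.sub_self, pow_zero, mul_one, one_mul, Nat.sub_zero, hf, hD] at htel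
    rw [mul_sub, sub_mul, mul_one, one_mul, sub_eq_sub_iff_sub_eq_sub]
    exact htel

end Diag

section Unit
variable [LocallyFiniteOrder X]

theorem eq_zero_of_mul_eq_zero_of_diag_ne_zero [Finite X] {u g : IncidenceAlgebra K X}
    (hu : ∀ a, u a a ≠ 0) (h : u * g = 0) : g = 0 := by
  ext a b _
  rw [zero_apply]
  induction a using WellFoundedGT.induction with
  | ind a ih =>
    by_cases hab : a ≤ b
    · have h' : (u * g) a b = 0 := by rw [h, zero_apply]
      rw [mul_apply, sum_eq_single a] at h'
      · exact (mul_eq_zero.1 h').resolve_left (hu a)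
      · intro t ht hta
        rw [ih t (lt_of_le_of_ne (mem_Icc.1 ht).1 hta.symm) (mem_Icc.1 ht).2, mul_zero]
      · simp [hab]
    · exact apply_eq_zero_of_not_le hab g

theorem isUnit_of_diag_ne_zero [DecidableEq X] [Finite K] [Finite X]
    {u : IncidenceAlgebra K X} (hu : ∀ a, u a a ≠ 0) : IsUnit u := by
  have hinj : Function.Injective (u * ·) := fun g g' h => by
    rw [← sub_eq_zero]
    exact eq_zero_of_mul_eq_zero_of_diag_ne_zero hu (by rw [mul_sub]; exact sub_eq_zero.2 h)
  obtain ⟨v, hv⟩ := (Finite.injective_iff_surjective.1 hinj) 1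
  refine ⟨⟨u, v, hv, hinj ?_⟩, rfl⟩
  change u * v = 1 at hv
  simp only
  rw [← mul_assoc, hv, one_mul, mul_one]

end Unit

section Count

/-- Elements with prescribed diagonal supported on the relation `R` off the diagonal are
determined freely by their values on the strict intervals in `R`. -/
def diagEqEquiv [DecidableEq X] [DecidableLT X] (c : X → K) (R : X → X → Prop)
    [DecidableRel R] :
    {u : IncidenceAlgebra K X // (∀ a, u a a = c a) ∧ ∀ a b, a < b → ¬ R a b → u a b = 0}
      ≃ ({p : X × X // p.1 < p.2 ∧ R p.1 p.2} → K) where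
  toFun u p := u.1 p.1.1 p.1.2
  invFun g := ⟨⟨fun a b => if a = b then c a else if h : a < b ∧ R a b then g ⟨(a, b), h⟩ else 0,
    fun a b h => by
      rw [if_neg (fun e => h e.le), dif_neg (fun e => h e.1.le)]⟩,
    fun a => if_pos rfl, fun a b hab hR => by
      change (if a = b then c a else if h : a < b ∧ R a b then g ⟨(a, b), h⟩ else 0) = 0
      rw [if_neg hab.ne, dif_neg (fun e => hR e.2)]⟩
  left_inv u := by
    refine Subtype.ext (ext fun a b hab => ?_)
    change (if a = b then c a else if h : a < b ∧ R a b then u.1 a b else 0) = u.1 a b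
    split_ifs with h₁ h₂
    · subst h₁; exact (u.2.1 a).symm
    · rfl
    · have hlt := lt_of_le_of_ne hab h₁
      exact (u.2.2 a b hlt fun hR => h₂ ⟨hlt, hR⟩).symm
  right_inv g := by
    funext ⟨p, hp⟩
    change (if p.1 = p.2 then c p.1 else
      if h : p.1 < p.2 ∧ R p.1 p.2 then g ⟨(p.1, p.2), h⟩ else 0) = g ⟨p, hp⟩
    rw [if_neg hp.1.ne, dif_pos hp]

variable [Fintype K] [Fintype X] [DecidableEq X] [DecidableLT X]

theorem card_diag_eq (c : X → K) (R : X → X → Prop) [DecidableRel R] :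
    Nat.card {u : IncidenceAlgebra K X //
        (∀ a, u a a = c a) ∧ ∀ a b, a < b → ¬ R a b → u a b = 0}
      = Fintype.card K ^ #{p : X × X | p.1 < p.2 ∧ R p.1 p.2} := by
  rw [Nat.card_congr (diagEqEquiv c R), Nat.card_eq_fintype_card, Fintype.card_fun,
    Fintype.card_subtype]

variable [LocallyFiniteOrder X]

theorem card_commute_diag [DecidableEq K] (d : X → K) :
    Nat.card {z : IncidenceAlgebra K X // (∀ a, z a a = 1) ∧ diag d * z = z * diag d}
      = Fintype.card K ^ #{p : X × X | p.1 < p.2 ∧ d p.1 = d p.2} := by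
  rw [← card_diag_eq (fun _ => 1) (fun a b => d a = d b)]
  refine Nat.card_congr (Equiv.subtypeEquivRight fun z => and_congr_right fun _ => ?_)
  constructor
  · intro h a b _ hd
    have := congrFun (DFunLike.congr_fun h a) b
    rw [diag_mul_apply, mul_diag_apply, mul_comm, ← sub_eq_zero, ← mul_sub] at this
    exact (mul_eq_zero.1 this).resolve_right (sub_ne_zero.2 hd)
  · intro h
    ext a b hab
    rw [diag_mul_apply, mul_diag_apply, mul_comm]
    rcases hab.eq_or_lt with rfl | hlt
    · rfl
    · by_cases hd : d a = d b
      · rw [hd]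
      · rw [h a b hlt hd, zero_mul, zero_mul]

theorem card_potent_diag_eq [DecidableEq K] {k : ℕ} (hk : (k : K) ≠ 0) {d : X → K}
    (hd : ∀ a, d a ^ (k + 1) = d a) :
    Nat.card {f : IncidenceAlgebra K X // f ^ (k + 1) = f ∧ ∀ a, f a a = d a}
      = Fintype.card K ^ #{p : X × X | p.1 < p.2 ∧ d p.1 ≠ d p.2} := by
  classical
  set c : X → K := fun a => (k + 1) * d a ^ k - 1 with hc
  have hc0 : ∀ a, c a ≠ 0 := by
    intro a
    have hk0 : k ≠ 0 := by rintro rfl; simp at hk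
    have := hd a
    rw [pow_succ, mul_left_eq_self₀] at this
    rcases this with h | h <;> simp [hc, h, hk0, hk]
  have hD : (diag d : IncidenceAlgebra K X) ^ (k + 1) = diag d := by
    rw [diag_pow]; congr 1; funext a; exact hd a
  have hfiber (f : {f : IncidenceAlgebra K X // f ^ (k + 1) = f ∧ ∀ a, f a a = d a}) :
      Nonempty ({u : IncidenceAlgebra K X // (∀ a, u a a = c a) ∧ f.1 * u = u * diag d}
        ≃ {z : IncidenceAlgebra K X // (∀ a, z a a = 1) ∧ diag d * z = z * diag d}) := by
    obtain ⟨w, hw, hfw⟩ := exists_intertwiner hd f.2.1 f.2.2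
    obtain ⟨w, rfl⟩ := isUnit_of_diag_ne_zero (fun a => (hw a).trans_ne (hc0 a))
    refine ⟨((Units.mulLeft w).symm).subtypeEquiv fun u => ?_⟩
    have hu : u = w * (↑w⁻¹ * u) := by rw [Units.mul_inv_cancel_left]
    change _ ↔ (∀ a, (↑w⁻¹ * u : IncidenceAlgebra K X) a a = 1) ∧
      diag d * (↑w⁻¹ * u) = (↑w⁻¹ * u) * diag d
    generalize (↑w⁻¹ * u : IncidenceAlgebra K X) = z at hu
    subst hu
    refine and_congr (forall_congr' fun a => ?_) ?_
    · rw [mul_apply_self, hw a]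
      exact mul_eq_left₀ (hc0 a)
    · rw [← mul_assoc, hfw, mul_assoc, mul_assoc, Units.mul_right_inj]
  have hsig : {u : IncidenceAlgebra K X // (∀ a, u a a = c a) ∧ ∀ a b, a < b → ¬ True → u a b = 0}
      ≃ Σ f : {f : IncidenceAlgebra K X // f ^ (k + 1) = f ∧ ∀ a, f a a = d a},
        {u : IncidenceAlgebra K X // (∀ a, u a a = c a) ∧ f.1 * u = u * diag d} := by
    refine Equiv.symm (Equiv.ofBijective (fun x => ⟨x.2.1, x.2.2.1, by simp⟩) ⟨?_, ?_⟩)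
    · rintro ⟨⟨f, hf⟩, u, hu, hfu⟩ ⟨⟨f', hf'⟩, u', hu', hfu'⟩ h
      obtain rfl : u = u' := congrArg Subtype.val h
      have hunit := isUnit_of_diag_ne_zero (fun a => (hu a).trans_ne (hc0 a))
      obtain rfl : f = f' := hunit.mul_right_cancel (hfu.trans hfu'.symm)
      rfl
    · rintro ⟨u, hu, _⟩
      obtain ⟨u, rfl⟩ := isUnit_of_diag_ne_zero (fun a => (hu a).trans_ne (hc0 a))
      refine ⟨⟨⟨u * diag d * ↑u⁻¹, ?_, fun a => ?_⟩, u, hu, ?_⟩, rfl⟩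
      · rw [Units.conj_pow, hD]
      · have h1 := congrArg (diagEval a) (Units.mul_inv u)
        rw [map_mul, map_one, diagEval_apply, diagEval_apply] at h1
        rw [mul_apply_self, mul_apply_self, diag_apply, if_pos rfl, mul_right_comm, h1, one_mul]
      · rw [Units.inv_mul_cancel_right]
  have hcard := Nat.card_congr hsig
  rw [card_diag_eq c (fun _ _ => True), Nat.card_congr (Equiv.sigmaCongrRight fun f =>
    (hfiber f).some), Nat.card_congr (Equiv.sigmaEquivProd _ _), Nat.card_prod,
    card_commute_diag] at hcard
  have hsplit : #{p : X × X | p.1 < p.2 ∧ True}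
      = #{p : X × X | p.1 < p.2 ∧ d p.1 ≠ d p.2} + #{p : X × X | p.1 < p.2 ∧ d p.1 = d p.2} := by
    rw [← card_filter_add_card_filter_not (fun p : X × X => d p.1 ≠ d p.2), filter_filter,
      filter_filter]
    simp
  rw [hsplit, pow_add] at hcard
  exact (Nat.eq_of_mul_eq_mul_right (pow_pos Fintype.card_pos _) hcard).symm

theorem card_potent [DecidableEq K] {k : ℕ} (hk : (k : K) ≠ 0) :
    Nat.card {f : IncidenceAlgebra K X // f ^ (k + 1) = f}
      = ∑ d : X → {x : K // x ^ (k + 1) = x},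
          Fintype.card K ^ #{p : X × X | p.1 < p.2 ∧ d p.1 ≠ d p.2} := by
  have e : {f : IncidenceAlgebra K X // f ^ (k + 1) = f}
      ≃ Σ d : X → {x : K // x ^ (k + 1) = x},
        {f : IncidenceAlgebra K X // f ^ (k + 1) = f ∧ ∀ a, f a a = (d a : K)} := by
    refine Equiv.symm (Equiv.ofBijective (fun x => ⟨x.2.1, x.2.2.1⟩) ⟨?_, ?_⟩)
    · rintro ⟨d, f, hf, hfd⟩ ⟨d', f', hf', hfd'⟩ h
      obtain rfl : f = f' := congrArg Subtype.val h
      obtain rfl : d = d' := funext fun a => Subtype.ext ((hfd a).symm.trans (hfd' a))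
      rfl
    · rintro ⟨f, hf⟩
      refine ⟨⟨fun a => ⟨f a a, ?_⟩, f, hf, fun _ => rfl⟩, rfl⟩
      have := congrArg (diagEval a) hf
      rwa [map_pow] at this
  rw [Nat.card_congr e, Nat.card_sigma]
  refine sum_congr rfl fun d _ => ?_
  rw [card_potent_diag_eq hk fun a => (d a).2]
  simp only [ne_eq, Subtype.ext_iff]

end Count

end IncidenceAlgebra

section Combinatorics

/-- The number of words `a : Fin n → σ` with letter counts `v` is a multinomial coefficient. -/
theorem card_filter_fiber_card_eq_multinomial {σ : Type*} [Fintype σ] [DecidableEq σ] (n : ℕ)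
    (v : σ → ℕ) (hv : ∑ i, v i = n) :
    #{a : Fin n → σ | (fun j => #{i | a i = j}) = v} = Nat.multinomial univ v := by
  have key : (∑ i : σ, (MvPolynomial.X i : MvPolynomial σ ℕ)) ^ n
      = ∑ a : Fin n → σ,
          MvPolynomial.monomial (Finsupp.equivFunOnFinite.symm fun j => #{i | a i = j}) 1 := by
    rw [← Fin.prod_const, Finset.prod_univ_sum, Fintype.piFinset_univ]
    refine sum_congr rfl fun a _ => ?_
    rw [MvPolynomial.monomial_eq, Finsupp.prod_fintype _ _ (by simp)]
    simp only [Finsupp.coe_equivFunOnFinite_symm, map_one, one_mul]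
    rw [← Finset.prod_fiberwise (g := a)]
    refine prod_congr rfl fun j _ => ?_
    rw [← Finset.prod_const]
    exact prod_congr rfl fun i hi => by rw [(mem_filter.1 hi).2]
  rw [Finset.sum_pow_eq_sum_piAntidiag] at key
  have h := congrArg (MvPolynomial.coeff (Finsupp.equivFunOnFinite.symm v)) key
  have hmono (w : σ → ℕ) : ∏ i, (MvPolynomial.X i : MvPolynomial σ ℕ) ^ w i
      = MvPolynomial.monomial (Finsupp.equivFunOnFinite.symm w) 1 := by
    rw [MvPolynomial.monomial_eq, Finsupp.prod_fintype _ _ (by simp)]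
    simp
  simp only [MvPolynomial.coeff_sum, hmono, ← map_natCast (MvPolynomial.C (σ := σ) (R := ℕ)),
    MvPolynomial.coeff_C_mul, MvPolynomial.coeff_monomial, EmbeddingLike.apply_eq_iff_eq] at h
  rw [card_filter, ← h, sum_eq_single v]
  · simp
  · intro w _ hw; simp [hw]
  · intro hv'; simp [hv] at hv'

theorem sum_comp_fiber_card {s n : ℕ} (g : (Fin s → ℕ) → ℕ) :
    ∑ a : Fin n → Fin s, g (fun j => #{i | a i = j})
      = ∑ v ∈ Finset.Nat.antidiagonalTuple s n, Nat.multinomial univ v * g v := by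
  rw [← sum_fiberwise_of_maps_to (s := univ) (t := Finset.Nat.antidiagonalTuple s n)
    (g := fun a : Fin n → Fin s => fun j => #{i | a i = j})]
  · refine sum_congr rfl fun v hv => ?_
    rw [Finset.Nat.mem_antidiagonalTuple] at hv
    rw [← card_filter_fiber_card_eq_multinomial n v hv, ← smul_eq_mul, ← sum_const]
    exact sum_congr rfl fun a ha => by rw [(mem_filter.1 ha).2]
  · intro a _
    rw [Finset.Nat.mem_antidiagonalTuple]
    have := card_eq_sum_card_fiberwise (s := univ) (t := univ) (f := a) (by simp)
    simpa using this.symm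

theorem sum_sum_eq_two_mul_sum_Ioi {n : ℕ} (F : Fin n → Fin n → ℕ) (hsymm : ∀ i j, F i j = F j i)
    (hdiag : ∀ i, F i i = 0) : ∑ i, ∑ j, F i j = 2 * ∑ i, ∑ j ∈ Ioi i, F i j := by
  have hsplit (i : Fin n) : ∑ j, F i j = ∑ j ∈ Ioi i, F i j + ∑ j ∈ Iio i, F i j := by
    rw [← sum_filter_add_sum_filter_not univ (fun j => i < j)]
    congr 1
    · exact sum_congr (by ext; simp) fun _ _ => rfl
    · rw [← sum_subset (s₁ := Iio i)]
      · intro j; simp only [mem_Iio, mem_filter, mem_univ, true_and]; exact fun h => h.not_gt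
      · intro j hj hj'
        simp only [mem_filter, mem_univ, true_and, mem_Iio] at hj hj'
        obtain rfl : i = j := by omega
        exact hdiag i
  have hswap : ∑ i, ∑ j ∈ Iio i, F i j = ∑ i, ∑ j ∈ Ioi i, F i j := by
    rw [sum_comm' (t' := univ) (s' := fun j => Ioi j) (by simp)]
    simp_rw [hsymm]
  simp_rw [hsplit]
  rw [sum_add_distrib, hswap, two_mul]

theorem sum_Ioi_ite_ne_eq {s n : ℕ} (a : Fin n → Fin s) :
    ∑ i, ∑ j ∈ Ioi i, (if a i ≠ a j then 1 else 0)
      = ∑ i, ∑ j ∈ Ioi i, #{t | a t = i} * #{t | a t = j} := by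
  have h₁ := sum_sum_eq_two_mul_sum_Ioi (fun i j => if a i ≠ a j then 1 else 0)
    (fun i j => by simp [eq_comm]) (by simp)
  have h₂ := sum_sum_eq_two_mul_sum_Ioi
    (fun i j : Fin s => if i ≠ j then #{t | a t = i} * #{t | a t = j} else 0)
    (fun i j => by simp [eq_comm, mul_comm]) (by simp)
  have h₃ : ∑ i, ∑ j ∈ Ioi i, (if i ≠ j then #{t | a t = i} * #{t | a t = j} else 0)
      = ∑ i, ∑ j ∈ Ioi i, #{t | a t = i} * #{t | a t = j} :=
    sum_congr rfl fun i _ => sum_congr rfl fun j hj => if_pos (mem_Ioi.1 hj).ne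
  have h₄ : ∑ i, ∑ j, (if a i ≠ a j then 1 else 0)
      = ∑ i, ∑ j, (if i ≠ j then #{t | a t = i} * #{t | a t = j} else 0) := by
    rw [← sum_fiberwise (s := univ) (g := a)]
    refine sum_congr rfl fun p _ => ?_
    rw [sum_congr rfl (g := fun _ => ∑ j, if p ≠ a j then 1 else 0)
      (fun i hi => by rw [(mem_filter.1 hi).2]), sum_const, smul_eq_mul,
      ← sum_fiberwise (s := univ) (g := a), mul_sum]
    refine sum_congr rfl fun r _ => ?_
    rw [sum_congr rfl (g := fun _ => if p ≠ r then 1 else 0)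
      (fun i hi => by rw [(mem_filter.1 hi).2]), sum_const, smul_eq_mul]
    split_ifs <;> simp
  omega

theorem sum_ite_ne_eq_sub {s n : ℕ} (a : Fin n → Fin s) (c : Fin s) :
    ∑ i, (if c ≠ a i then 1 else 0) = n - #{t | a t = c} := by
  have h := card_filter_add_card_filter_not (s := (univ : Finset (Fin n))) (fun t => a t = c)
  rw [card_univ, Fintype.card_fin] at h
  rw [← card_filter]
  simp only [ne_eq, eq_comm (a := c)]
  omega

end Combinatorics

section Rhombus

variable {n m : ℕ} {X : Type*} [PartialOrder X]

/-- The bijection listing the rhombus as its bottom, its top and its two middle chains. -/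
noncomputable def rhombusEquiv (x : Fin (n + 2) → X) (y : Fin m → X)
    (hxinj : Function.Injective x) (hyinj : Function.Injective y) (hne : ∀ i j, x i ≠ y j)
    (hcover : ∀ w : X, (∃ i, w = x i) ∨ (∃ j, w = y j)) :
    (Unit ⊕ Unit) ⊕ (Fin n ⊕ Fin m) ≃ X :=
  Equiv.ofBijective
    (Sum.elim (Sum.elim (fun _ => x 0) (fun _ => x (Fin.last (n + 1))))
      (Sum.elim (fun i => x i.succ.castSucc) y)) <| by
    constructor
    · rintro ((i | i) | (i | i)) ((j | j) | (j | j)) h <;>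
        simp [hxinj.eq_iff, hyinj.eq_iff, hne, fun a b => (hne a b).symm, Fin.ext_iff] at h ⊢ <;>
        omega
    · intro w
      rcases hcover w with ⟨i, rfl⟩ | ⟨j, rfl⟩
      · induction i using Fin.lastCases with
        | last => exact ⟨.inl (.inr ()), rfl⟩
        | cast i =>
          induction i using Fin.cases with
          | zero => exact ⟨.inl (.inl ()), rfl⟩
          | succ i => exact ⟨.inr (.inl i), rfl⟩
      · exact ⟨.inr (.inr j), rfl⟩

/-- The number of strictly comparable pairs of the rhombus on which a labelling with value `c` at
the bottom, `c'` at the top and `a`, `b` on the middle chains takes distinct values. -/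
def rhombusDescents {T : Type*} [DecidableEq T] (c c' : T) (a : Fin n → T) (b : Fin m → T) : ℕ :=
  ∑ i, ∑ j ∈ Ioi i, (if a i ≠ a j then 1 else 0) + ∑ i, ∑ j ∈ Ioi i, (if b i ≠ b j then 1 else 0)
    + (∑ i, (if c ≠ a i then 1 else 0) + ∑ i, (if c ≠ b i then 1 else 0))
    + (∑ i, (if c' ≠ a i then 1 else 0) + ∑ i, (if c' ≠ b i then 1 else 0))
    + if c ≠ c' then 1 else 0

theorem rhombusDescents_comp {T : Type*} [DecidableEq T] (σ : Equiv.Perm T) (c c' : T)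
    (a : Fin n → T) (b : Fin m → T) :
    rhombusDescents (σ c) (σ c') (σ ∘ a) (σ ∘ b) = rhombusDescents c c' a b := by
  simp [rhombusDescents]

theorem sum_rhombusDescents_const {T : Type*} [Fintype T] [DecidableEq T] (q : ℕ) (c₀ : T) :
    ∑ c : T, ∑ c' : T, ∑ a : Fin n → T, ∑ b : Fin m → T, q ^ rhombusDescents c c' a b
      = Fintype.card T *
        ∑ c' : T, ∑ a : Fin n → T, ∑ b : Fin m → T, q ^ rhombusDescents c₀ c' a b := by
  rw [← smul_eq_mul, ← card_univ, ← sum_const]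
  refine sum_congr rfl fun c _ => ?_
  set σ := Equiv.swap c₀ c
  rw [← Equiv.sum_comp σ]
  refine sum_congr rfl fun c' _ => ?_
  rw [← ((Equiv.refl (Fin n)).arrowCongr σ).sum_comp]
  refine sum_congr rfl fun a _ => ?_
  rw [← ((Equiv.refl (Fin m)).arrowCongr σ).sum_comp]
  refine sum_congr rfl fun b _ => ?_
  rw [← rhombusDescents_comp σ c₀ c' a b, Equiv.swap_apply_left]
  rfl

theorem rhombusDescents_eq_fiber_card {s : ℕ} (c c' : Fin s) (a : Fin n → Fin s)
    (b : Fin m → Fin s) :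
    rhombusDescents c c' a b
      = ∑ i : Fin s, ∑ j ∈ Ioi i, (#{t | a t = i} * #{t | a t = j} + #{t | b t = i} * #{t | b t = j})
        + ((n - #{t | a t = c}) + (m - #{t | b t = c})
          + ((n - #{t | a t = c'}) + (m - #{t | b t = c'})) + if c ≠ c' then 1 else 0) := by
  simp only [rhombusDescents, sum_Ioi_ite_ne_eq, sum_ite_ne_eq_sub, sum_add_distrib]
  ring

theorem sum_pow_rhombusDescents {s : ℕ} (q : ℕ) (c : Fin s) :
    ∑ c' : Fin s, ∑ a : Fin n → Fin s, ∑ b : Fin m → Fin s, q ^ rhombusDescents c c' a b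
      = ∑ v ∈ Finset.Nat.antidiagonalTuple s n, ∑ w ∈ Finset.Nat.antidiagonalTuple s m,
          Nat.multinomial univ v * Nat.multinomial univ w *
            q ^ (∑ i : Fin s, ∑ j ∈ Ioi i, (v i * v j + w i * w j)) *
            (q ^ (2 * ((n - v c) + (m - w c))) +
              ∑ j ∈ univ.filter (fun j : Fin s => j ≠ c),
                q ^ (2 * (n + m) + 1 - (v c + v j + w c + w j))) := by
  simp_rw [rhombusDescents_eq_fiber_card]
  have hb (c' : Fin s) (a : Fin n → Fin s) := sum_comp_fiber_card (s := s) (n := m) fun w =>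
    q ^ (∑ i : Fin s, ∑ j ∈ Ioi i, (#{t | a t = i} * #{t | a t = j} + w i * w j)
        + ((n - #{t | a t = c}) + (m - w c)
          + ((n - #{t | a t = c'}) + (m - w c')) + if c ≠ c' then 1 else 0))
  have ha (c' : Fin s) := sum_comp_fiber_card (s := s) (n := n) fun v =>
    ∑ w ∈ Finset.Nat.antidiagonalTuple s m, Nat.multinomial univ w *
    q ^ (∑ i : Fin s, ∑ j ∈ Ioi i, (v i * v j + w i * w j)
        + ((n - v c) + (m - w c) + ((n - v c') + (m - w c')) + if c ≠ c' then 1 else 0))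
  simp_rw [hb, ha]
  rw [sum_comm]
  refine sum_congr rfl fun v hv => ?_
  simp_rw [mul_sum]
  rw [sum_comm]
  refine sum_congr rfl fun w hw => ?_
  rw [Finset.Nat.mem_antidiagonalTuple] at hv hw
  have hsum : q ^ (2 * ((n - v c) + (m - w c))) +
      ∑ j ∈ univ.filter (fun j : Fin s => j ≠ c), q ^ (2 * (n + m) + 1 - (v c + v j + w c + w j))
      = ∑ c', q ^ ((n - v c) + (m - w c) + ((n - v c') + (m - w c')) +
          if c ≠ c' then 1 else 0) := by
    rw [← add_sum_erase _ _ (mem_univ c), filter_ne']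
    congr 1
    · simp only [ne_eq, not_true_eq_false, if_false, add_zero, two_mul]
    · refine sum_congr rfl fun j hj => ?_
      have hjc := (mem_erase.1 hj).1
      have hle (u : Fin s → ℕ) : u c + u j ≤ ∑ i, u i := by
        rw [← sum_pair hjc.symm]
        exact sum_le_sum_of_subset (subset_univ _)
      have h₁ := hle v
      have h₂ := hle w
      rw [if_pos hjc.symm]
      congr 1
      omega
  rw [hsum, mul_sum]
  refine sum_congr rfl fun c' _ => ?_
  rw [pow_add q (∑ i, ∑ j ∈ Ioi i, (v i * v j + w i * w j)), mul_assoc, mul_assoc]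

variable [Fintype X] [DecidableLT X]

theorem card_lt_ne_eq_rhombusDescents {T : Type*} [DecidableEq T]
    (x : Fin (n + 2) → X) (y : Fin m → X)
    (hxx : ∀ i j, x i ≤ x j ↔ i ≤ j) (hyy : ∀ i j, y i ≤ y j ↔ i ≤ j)
    (hxy : ∀ i j, x i ≤ y j ↔ i = 0) (hyx : ∀ i j, y j ≤ x i ↔ i = Fin.last (n + 1))
    (hxinj : Function.Injective x) (hyinj : Function.Injective y) (hne : ∀ i j, x i ≠ y j)
    (hcover : ∀ w : X, (∃ i, w = x i) ∨ (∃ j, w = y j)) (d : X → T) :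
    #{p : X × X | p.1 < p.2 ∧ d p.1 ≠ d p.2}
      = rhombusDescents (d (x 0)) (d (x (Fin.last (n + 1)))) (fun i => d (x i.succ.castSucc))
          (fun j => d (y j)) := by
  set e := rhombusEquiv x y hxinj hyinj hne hcover
  have e₁ : e (.inl (.inl ())) = x 0 := rfl
  have e₂ : e (.inl (.inr ())) = x (Fin.last (n + 1)) := rfl
  have e₃ (i) : e (.inr (.inl i)) = x i.succ.castSucc := rfl
  have e₄ (i) : e (.inr (.inr i)) = y i := rfl
  have hIoi {r : ℕ} (g : Fin r → T) (i : Fin r) :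
      ∑ j, (if i < j ∧ g i ≠ g j then 1 else 0) = ∑ j ∈ Ioi i, (if g i ≠ g j then 1 else 0) := by
    rw [← filter_lt_eq_Ioi, sum_filter]
    exact sum_congr rfl fun j _ => ite_and ..
  have hlt (i j) : x i < x j ↔ i < j := by simp only [lt_iff_le_not_ge, hxx]
  have hlt' (i j) : y i < y j ↔ i < j := by simp only [lt_iff_le_not_ge, hyy]
  have hltxy (i j) : x i < y j ↔ i = 0 := by rw [(hne i j).le_iff_lt.symm, hxy]
  have hltyx (i j) : y j < x i ↔ i = Fin.last (n + 1) := by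
    rw [(hne i j).symm.le_iff_lt.symm, hyx]
  have hz (i : Fin n) : i.succ.castSucc ≠ 0 := by simp [Fin.ext_iff]
  have hl (i : Fin n) : i.succ.castSucc ≠ Fin.last (n + 1) := (Fin.castSucc_lt_last _).ne
  have hpos (i : Fin n) : (0 : Fin (n + 2)) < i.succ.castSucc := by simp [Fin.lt_def]
  have hlast (i : Fin (n + 2)) : ¬ Fin.last (n + 1) < i := (Fin.le_last i).not_gt
  have hmid (i j : Fin n) : i.succ.castSucc < j.succ.castSucc ↔ i < j := by simp
  have hbot (i : Fin (n + 2)) : ¬ i < 0 := Fin.not_lt_zero i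
  have hcl (i : Fin n) : i.succ.castSucc < Fin.last (n + 1) := Fin.castSucc_lt_last _
  have h0l : (0 : Fin (n + 2)) < Fin.last (n + 1) := Fin.last_pos
  rw [card_filter, Fintype.sum_prod_type, ← e.sum_comp]
  simp_rw [← e.sum_comp]
  simp only [Fintype.sum_sum_type, univ_unique, PUnit.default_eq_unit, sum_singleton, e₁, e₂, e₃,
    e₄, hlt, hlt', hltxy, hltyx, hz, hl, hpos, hlast, hmid, hbot, hcl, h0l, h0l.ne, h0l.ne',
    false_and, true_and, if_false, sum_const_zero, zero_add, add_zero, sum_add_distrib]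
  rw [sum_congr rfl fun i _ => hIoi (fun i => d (x i.succ.castSucc)) i,
    sum_congr rfl fun i _ => hIoi (fun i => d (y i)) i]
  simp only [rhombusDescents, ne_comm (b := d (x (Fin.last (n + 1))))]
  ring

theorem sum_pow_card_lt_ne {T : Type*} [Fintype T] [DecidableEq T] [DecidableEq X] (q : ℕ)
    (x : Fin (n + 2) → X) (y : Fin m → X)
    (hxx : ∀ i j, x i ≤ x j ↔ i ≤ j) (hyy : ∀ i j, y i ≤ y j ↔ i ≤ j)
    (hxy : ∀ i j, x i ≤ y j ↔ i = 0) (hyx : ∀ i j, y j ≤ x i ↔ i = Fin.last (n + 1))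
    (hxinj : Function.Injective x) (hyinj : Function.Injective y) (hne : ∀ i j, x i ≠ y j)
    (hcover : ∀ w : X, (∃ i, w = x i) ∨ (∃ j, w = y j)) :
    ∑ d : X → T, q ^ #{p : X × X | p.1 < p.2 ∧ d p.1 ≠ d p.2}
      = ∑ c : T, ∑ c' : T, ∑ a : Fin n → T, ∑ b : Fin m → T, q ^ rhombusDescents c c' a b := by
  simp_rw [card_lt_ne_eq_rhombusDescents x y hxx hyy hxy hyx hxinj hyinj hne hcover]
  set e := rhombusEquiv x y hxinj hyinj hne hcover
  have hbij : Function.Bijective fun d : X → T => (d (x 0), d (x (Fin.last (n + 1))),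
      (fun i : Fin n => d (x i.succ.castSucc)), fun j => d (y j)) := by
    refine ⟨fun d d' h => ?_, ?_⟩
    · simp only [Prod.mk.injEq] at h
      obtain ⟨h₁, h₂, h₃, h₄⟩ := h
      funext w
      obtain ⟨(_ | _) | (i | j), rfl⟩ := e.surjective w
      exacts [h₁, h₂, congrFun h₃ i, congrFun h₄ j]
    · rintro ⟨c, c', a, b⟩
      refine ⟨Sum.elim (Sum.elim (fun _ => c) (fun _ => c')) (Sum.elim a b) ∘ e.symm, ?_⟩
      have e₁ : e.symm (x 0) = .inl (.inl ()) := e.symm_apply_eq.2 rfl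
      have e₂ : e.symm (x (Fin.last (n + 1))) = .inl (.inr ()) := e.symm_apply_eq.2 rfl
      have e₃ (i) : e.symm (x i.succ.castSucc) = .inr (.inl i) := e.symm_apply_eq.2 rfl
      have e₄ (i) : e.symm (y i) = .inr (.inr i) := e.symm_apply_eq.2 rfl
      simp only [Function.comp_apply, e₁, e₂, e₃, e₄, Sum.elim_inl, Sum.elim_inr]
  rw [Fintype.sum_bijective _ hbij _
    (fun z => q ^ rhombusDescents z.1 z.2.1 z.2.2.1 z.2.2.2) fun _ => rfl]
  simp only [Fintype.sum_prod_type]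

end Rhombus

/-- Counting `(k+1)`-potent elements of the incidence algebra of the rhombus poset
`X = {x₀, x₁, …, x_{n+1}, y₁, …, y_m}` (indexed here by `x : Fin (n+2) → X`, a chain, and
`y : Fin m → X`, a chain with `x₀ ≤ y₁` and `y_m ≤ x_{n+1}`): their number equals
`∑ s · (n!/(n₁!⋯n_s!)) · (m!/(m₁!⋯m_s!)) · q^(∑_{i<j}(n_i n_j + m_i m_j)) · F`, where
`F = q^(2(n−n₁+m−m₁)) + ∑_{j=2}^{s} q^(2(n+m)+1−(n₁+n_j+m₁+m_j))`. -/
theorem stmt_14 {K : Type*} [Field K] [Fintype K] [DecidableEq K] (q k s n m : ℕ)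
    (hq : Fintype.card K = q) (hk : 1 ≤ k)
    (hchar_k : (k : K) ≠ 0) (hchar_k1 : ((k + 1 : ℕ) : K) ≠ 0)
    (hs : (Finset.univ.filter (fun x : K => x ^ (k + 1) = x)).card = s) (hs0 : 0 < s)
    (X : Type*) [Fintype X] [PartialOrder X] [DecidableEq X] [LocallyFiniteOrder X]
    (x : Fin (n + 2) → X) (y : Fin m → X)
    (hxx : ∀ i j, x i ≤ x j ↔ i ≤ j)
    (hyy : ∀ i j, y i ≤ y j ↔ i ≤ j)
    (hxy : ∀ i j, x i ≤ y j ↔ i = 0)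
    (hyx : ∀ i j, y j ≤ x i ↔ i = Fin.last (n + 1))
    (hxinj : Function.Injective x) (hyinj : Function.Injective y)
    (hne : ∀ i j, x i ≠ y j)
    (hcover : ∀ w : X, (∃ i, w = x i) ∨ (∃ j, w = y j)) :
    Nat.card {f : IncidenceAlgebra K X // f ^ (k + 1) = f}
      = ∑ v ∈ Finset.Nat.antidiagonalTuple s n,
          ∑ w ∈ Finset.Nat.antidiagonalTuple s m,
            s * Nat.multinomial Finset.univ v * Nat.multinomial Finset.univ w *
              q ^ (∑ i : Fin s, ∑ j ∈ Finset.Ioi i, (v i * v j + w i * w j)) *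
              (q ^ (2 * ((n - v ⟨0, hs0⟩) + (m - w ⟨0, hs0⟩))) +
                ∑ j ∈ Finset.univ.filter (fun j : Fin s => j ≠ ⟨0, hs0⟩),
                  q ^ (2 * (n + m) + 1 - (v ⟨0, hs0⟩ + v j + w ⟨0, hs0⟩ + w j))) := by
  classical
  obtain rfl := hq
  have φ : {x : K // x ^ (k + 1) = x} ≃ Fin s :=
    Fintype.equivFinOfCardEq (by rw [Fintype.card_subtype, hs])
  rw [IncidenceAlgebra.card_potent hchar_k,
    Fintype.sum_equiv ((Equiv.refl X).arrowCongr φ) _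
      (fun d => Fintype.card K ^ #{p : X × X | p.1 < p.2 ∧ d p.1 ≠ d p.2})
      (fun d => by simp),
    sum_pow_card_lt_ne _ x y hxx hyy hxy hyx hxinj hyinj hne hcover,
    sum_rhombusDescents_const _ ⟨0, hs0⟩, sum_pow_rhombusDescents, Fintype.card_fin]
  simp only [mul_sum, ← mul_assoc]
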